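/- Let x_1 < x_2 < x_3 be real numbers and let θ̂ = μ̂ + iσ̂ ∈ ℍ maximize the Cauchy likelihood of (x_1, x_2, x_3) over ℍ. Then F(x_3; θ̂) + F(x_1; θ̂) = 2·F(x_2; θ̂), where F(x; μ + iσ) = 1/2 + (1/π)·arctan((x − μ)/σ) is the cumulative distribution function of the Cauchy distribution with location μ and scale σ. -/

import Mathlib

open Complex Finset

/-- The Cauchy likelihood of the sample `x` at parameter `θ = μ + iσ`. -/
noncomputable def cauchyL {n : ℕ} (x : Fin n → ℝ) (θ : ℂ) : ℝ :=
  ∏ j, (θ.im / Real.pi) / ((x j - θ.re) ^ 2 + θ.im ^ 2)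

/-- Cumulative distribution function of the Cauchy distribution with parameter `θ = μ + iσ`. -/
noncomputable def cauchyCDF (xv : ℝ) (θ : ℂ) : ℝ :=
  1 / 2 + (1 / Real.pi) * Real.arctan ((xv - θ.re) / θ.im)

theorem aux_angles (a b c : ℝ) (hab : a < b) (hbc : b < c) (hca : c - a < Real.pi)
    (hc : Real.cos (2*a) + Real.cos (2*b) + Real.cos (2*c) = 0)
    (hs : Real.sin (2*a) + Real.sin (2*b) + Real.sin (2*c) = 0) : c + a = 2 * b := by
  have e1 : Real.cos (2*(b-a)) = -1/2 := by
    rw [mul_sub, Real.cos_sub]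
    have h1 := Real.sin_sq_add_cos_sq (2*a)
    have h2 := Real.sin_sq_add_cos_sq (2*b)
    have h3 := Real.sin_sq_add_cos_sq (2*c)
    rw [show Real.cos (2*c) = -(Real.cos (2*a) + Real.cos (2*b)) by linarith,
      show Real.sin (2*c) = -(Real.sin (2*a) + Real.sin (2*b)) by linarith] at h3
    linarith
  have e2 : Real.cos (2*(c-b)) = -1/2 := by
    rw [mul_sub, Real.cos_sub]
    have h1 := Real.sin_sq_add_cos_sq (2*a)
    have h2 := Real.sin_sq_add_cos_sq (2*b)
    have h3 := Real.sin_sq_add_cos_sq (2*c)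
    rw [show Real.cos (2*a) = -(Real.cos (2*c) + Real.cos (2*b)) by linarith,
      show Real.sin (2*a) = -(Real.sin (2*c) + Real.sin (2*b)) by linarith] at h1
    linarith
  rw [Real.cos_two_mul] at e1 e2
  have e3 : Real.cos (b-a) ^ 2 = Real.cos (c-b) ^ 2 := by linarith
  rcases sq_eq_sq_iff_eq_or_eq_neg.mp e3 with h | h
  · have := Real.injOn_cos ⟨by linarith, by linarith⟩ ⟨by linarith, by linarith⟩ h
    linarith
  · rw [← Real.cos_pi_sub] at h
    have := Real.injOn_cos ⟨by linarith, by linarith⟩ ⟨by linarith, by linarith⟩ h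
    linarith

theorem aux_cos (t : ℝ) : Real.cos (2 * Real.arctan t) = 2 / (1 + t^2) - 1 := by
  rw [Real.cos_two_mul, Real.cos_sq_arctan]; ring

theorem aux_sin (t : ℝ) : Real.sin (2 * Real.arctan t) = 2 * t / (1 + t^2) := by
  have h : Real.sin (Real.arctan t) = t * Real.cos (Real.arctan t) := by
    rw [Real.sin_arctan, Real.cos_arctan]; ring
  rw [Real.sin_two_mul, h]
  have := Real.cos_sq_arctan t
  rw [show 2 * (t * Real.cos (Real.arctan t)) * Real.cos (Real.arctan t)
    = 2 * t * Real.cos (Real.arctan t)^2 by ring, this]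
  ring

theorem stmt_16 (x₁ x₂ x₃ : ℝ) (h12 : x₁ < x₂) (h23 : x₂ < x₃)
    (θhat : ℂ) (hθhat : 0 < θhat.im)
    (hmax : ∀ θ : ℂ, 0 < θ.im → cauchyL ![x₁, x₂, x₃] θ ≤ cauchyL ![x₁, x₂, x₃] θhat) :
    cauchyCDF x₃ θhat + cauchyCDF x₁ θhat = 2 * cauchyCDF x₂ θhat := by
  obtain ⟨m, s⟩ := θhat
  simp only at hθhat
  have key : ∀ μ σ : ℝ, 0 < σ →
      σ^3 * (((x₁-m)^2+s^2)*((x₂-m)^2+s^2)*((x₃-m)^2+s^2)) ≤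
      s^3 * (((x₁-μ)^2+σ^2)*((x₂-μ)^2+σ^2)*((x₃-μ)^2+σ^2)) := by
    intro μ σ hσ
    have h := hmax ⟨μ, σ⟩ hσ
    simp only [cauchyL, Fin.prod_univ_three, Matrix.cons_val] at h
    have hpi := Real.pi_pos
    rw [div_mul_div_comm, div_mul_div_comm,
      div_mul_div_comm (s / Real.pi), div_mul_div_comm (s / Real.pi * (s / Real.pi)),
      div_le_div_iff₀ (by positivity) (by positivity)] at h
    have h2 : (1/Real.pi)^3 * (σ^3 * (((x₁-m)^2+s^2)*((x₂-m)^2+s^2)*((x₃-m)^2+s^2))) ≤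
      (1/Real.pi)^3 * (s^3 * (((x₁-μ)^2+σ^2)*((x₂-μ)^2+σ^2)*((x₃-μ)^2+σ^2))) := by
      exact le_of_eq_of_le (by ring) (h.trans_eq (by ring))
    exact le_of_mul_le_mul_left h2 (by positivity)
  have d1 : (x₁-m) * (((x₂-m)^2+s^2)*((x₃-m)^2+s^2)) + (x₂-m) * (((x₁-m)^2+s^2)*((x₃-m)^2+s^2))
      + (x₃-m) * (((x₁-m)^2+s^2)*((x₂-m)^2+s^2)) = 0 := by
    have hq : ∀ x : ℝ, HasDerivAt (fun μ : ℝ => (x-μ)^2+s^2) (-(2*(x-m))) m := by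
      intro x
      have := (((hasDerivAt_id m).const_sub x).pow 2).add_const (s^2)
      exact this.congr_deriv (by simp)
    have hd := ((hq x₁).mul (hq x₂)).mul (hq x₃)
    have hmin : IsLocalMin ((fun μ : ℝ => (x₁-μ)^2+s^2) * (fun μ : ℝ => (x₂-μ)^2+s^2)
        * (fun μ : ℝ => (x₃-μ)^2+s^2)) m := by
      refine Filter.Eventually.of_forall fun μ => ?_
      exact le_of_mul_le_mul_left (key μ s hθhat) (by positivity)
    have h0 := hmin.hasDerivAt_eq_zero hd
    simp only [Pi.mul_apply] at h0
    linarith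
  have d2 : 2*s^2 * (((x₂-m)^2+s^2)*((x₃-m)^2+s^2) + ((x₁-m)^2+s^2)*((x₃-m)^2+s^2)
      + ((x₁-m)^2+s^2)*((x₂-m)^2+s^2)) = 3 * (((x₁-m)^2+s^2)*((x₂-m)^2+s^2)*((x₃-m)^2+s^2)) := by
    have hq : ∀ x : ℝ, HasDerivAt (fun σ : ℝ => (x-m)^2+σ^2) (2*s) s := by
      intro x
      have := ((hasDerivAt_id s).pow 2).const_add ((x-m)^2)
      exact this.congr_deriv (by simp)
    have hd := ((((hq x₁).mul (hq x₂)).mul (hq x₃)).const_mul (s^3)).sub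
      ((hasDerivAt_pow 3 s).mul_const (((x₁-m)^2+s^2)*((x₂-m)^2+s^2)*((x₃-m)^2+s^2)))
    have h0 := IsLocalMin.hasDerivAt_eq_zero (by
      filter_upwards [lt_mem_nhds hθhat] with σ hσ
      have := key m σ hσ
      simp only [Pi.mul_apply, Pi.sub_apply]
      linarith) hd
    simp only [Pi.mul_apply] at h0
    norm_num at h0
    have : s^2 ≠ 0 := by positivity
    apply mul_left_cancel₀ this
    linarith
  have p1 : (x₁-m)^2+s^2 ≠ 0 := by positivity
  have p2 : (x₂-m)^2+s^2 ≠ 0 := by positivity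
  have p3 : (x₃-m)^2+s^2 ≠ 0 := by positivity
  have hs0 : s ≠ 0 := hθhat.ne'
  have r : ∀ x : ℝ, 1 + ((x-m)/s)^2 = ((x-m)^2+s^2)/s^2 := by
    intro x; field_simp; ring
  have main := aux_angles (Real.arctan ((x₁-m)/s)) (Real.arctan ((x₂-m)/s))
    (Real.arctan ((x₃-m)/s)) (Real.arctan_strictMono (by gcongr))
    (Real.arctan_strictMono (by gcongr))
    (by linarith [Real.arctan_lt_pi_div_two ((x₃-m)/s), Real.neg_pi_div_two_lt_arctan ((x₁-m)/s)])
    (by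
      rw [aux_cos, aux_cos, aux_cos, r, r, r]
      generalize (x₁-m)^2+s^2 = q1 at *
      generalize (x₂-m)^2+s^2 = q2 at *
      generalize (x₃-m)^2+s^2 = q3 at *
      field_simp
      linarith)
    (by
      rw [aux_sin, aux_sin, aux_sin, r, r, r]
      generalize (x₁-m)^2+s^2 = q1 at *
      generalize (x₂-m)^2+s^2 = q2 at *
      generalize (x₃-m)^2+s^2 = q3 at *
      field_simp
      linear_combination (2 * s) * d1)
  simp only [cauchyCDF]
  linear_combination (1 / Real.pi) * main
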